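/- The language L = { a^m b^m : m ∈ ℕ } ∪ { a^m c b^{2m} : m ∈ ℕ } over the alphabet {a, b, c} is not k-rated linear for any nonnegative rational k; in particular, it is not fix-rated linear. -/

import Mathlib

/-!
The key point is that, near the outside of a derivation, a `g/h`-rated grammar consumes a long word
`aᵐ z bʳᵐ` from its left and right ends at the fixed rate `g/h`.

If `S ⇒* u B w ⇒* u q w = aᵐ z bʳᵐ` with `|u| + |w| < m`, then `u = aⁱ`, `w = bʲ` and `h j = g i`.
Rules have bounded size, so such cuts exist at arbitrarily large depth `i + j` (`exists_cut`), and
since only finitely many nonterminals occur as left-hand sides, two cuts of different depth share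
the same nonterminal `B`. Exchanging the two contexts yields a derivable word `aⁱ' q bʲ'` with the
same core `q` (`exists_context_swap`). Comparing letter counts in `abcLang` gives
`j' - j = r (i' - i)`, hence `g = r h`. The family `aᵐ bᵐ` gives `r = 1`, the family `aᵐ c b²ᵐ`
gives `r = 2`, and the two are incompatible for `h ≠ 0`.
-/

/-- The `i`-fold repetition `v^i` of a word `v`. -/
def wordPow {T : Type} (v : List T) : ℕ → List T
  | 0 => []
  | n + 1 => v ++ wordPow v n

/-- A production of a linear grammar: either `A → u` (with `u` a terminal word)
or `A → u B w` (with `u, w` terminal words and `B` a nonterminal). -/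
structure LinearRule (T N : Type) where
  input : N
  output : List T ⊕ (List T × N × List T)

/-- `LinDerives rs A p` : from nonterminal `A`, the linear productions in `rs`
derive the terminal word `p`. -/
inductive LinDerives {T N : Type} (rs : List (LinearRule T N)) : N → List T → Prop
  | terminal {A : N} {u : List T} (hr : (⟨A, Sum.inl u⟩ : LinearRule T N) ∈ rs) :
      LinDerives rs A u
  | step {A B : N} {u w p : List T}
      (hr : (⟨A, Sum.inr (u, B, w)⟩ : LinearRule T N) ∈ rs)
      (hp : LinDerives rs B p) :
      LinDerives rs A (u ++ p ++ w)

/-- A linear grammar: a type of nonterminals, a start symbol, and a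
finite list of linear productions. -/
structure LinearGrammar (T : Type) where
  NT : Type
  start : NT
  rules : List (LinearRule T NT)

/-- The language generated by a linear grammar. -/
def LinearGrammar.language {T : Type} (G : LinearGrammar T) : Set (List T) :=
  {p | LinDerives G.rules G.start p}

/-- A linear grammar is `(g/h)`-rated linear (`k = g/h`) if every production
`A → u B w` satisfies `h * |w| = g * |u|`. -/
def LinearGrammar.IsRated {T : Type} (g h : ℕ) (G : LinearGrammar T) : Prop :=
  ∀ r ∈ G.rules, ∀ u w, ∀ B : G.NT, r.output = Sum.inr (u, B, w) →
    h * w.length = g * u.length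

/-- A grammar generates exactly the language `L`, up to the empty word. -/
def LinearGrammar.GeneratesModEmpty {T : Type} (G : LinearGrammar T) (L : Set (List T)) :
    Prop :=
  ∀ p : List T, p ≠ [] → (p ∈ L ↔ p ∈ G.language)

/-- A language is linear if some linear grammar generates it, up to the empty word. -/
def IsLinearLang {T : Type} (L : Set (List T)) : Prop :=
  ∃ G : LinearGrammar T, G.GeneratesModEmpty L

/-- A language is `(g/h)`-rated linear if some `(g/h)`-rated linear grammar
generates it, up to the empty word. -/
def IsRatedLinearLang {T : Type} (g h : ℕ) (L : Set (List T)) : Prop :=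
  ∃ G : LinearGrammar T, G.IsRated g h ∧ G.GeneratesModEmpty L

/-- A `k`-linear grammar: a linear grammar together with the extra production
`S → S₁S₂⋯S_k` from a start symbol `S`, where none of the `Sᵢ` (the `heads`)
occurs on the right-hand side of any other production and `S` occurs in no other
production at all (the latter is automatic here, since the start symbol is kept
as a fresh symbol outside the type `NT` of the remaining nonterminals). -/
structure KLinearGrammar (T : Type) (k : ℕ) where
  NT : Type
  heads : Fin k → NT
  rules : List (LinearRule T NT)
  heads_not_on_rhs : ∀ r ∈ rules, ∀ u w, ∀ B : NT, r.output = Sum.inr (u, B, w) →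
    ∀ i : Fin k, B ≠ heads i

/-- The language generated by a `k`-linear grammar: as the start symbol occurs
only in the production `S → S₁S₂⋯S_k`, it consists of the concatenations
`p₁p₂⋯p_k` where each `pᵢ` is derived from `Sᵢ` by the linear productions. -/
def KLinearGrammar.language {T : Type} {k : ℕ} (G : KLinearGrammar T k) : Set (List T) :=
  {p | ∃ ps : Fin k → List T, p = (List.ofFn ps).flatten ∧
    ∀ i : Fin k, LinDerives G.rules (G.heads i) (ps i)}

/-- A language is `k`-linear if some `k`-linear grammar generates it, up to the
empty word. -/
def IsKLinearLang {T : Type} (k : ℕ) (L : Set (List T)) : Prop :=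
  ∃ G : KLinearGrammar T k, ∀ p : List T, p ≠ [] → (p ∈ L ↔ p ∈ G.language)

/-- A language is metalinear if it is `k`-linear for some positive integer `k`. -/
def IsMetalinearLang {T : Type} (L : Set (List T)) : Prop :=
  ∃ k : ℕ, 0 < k ∧ IsKLinearLang k L

/-- The language `{aᵐ bᵐ : m ∈ ℕ} ∪ {aᵐ c b²ᵐ : m ∈ ℕ}` (Example 9).  Here the
alphabet `{a, b, c}` is `Fin 3` with `a = 0`, `b = 1`, `c = 2`. -/
def abcLang : Set (List (Fin 3)) :=
  {p | (∃ m : ℕ, p = List.replicate m 0 ++ List.replicate m 1) ∨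
       (∃ m : ℕ, p = List.replicate m 0 ++ [2] ++ List.replicate (2 * m) 1)}

/-- The number of terminals on the right-hand side of a production. -/
def LinearRule.size {T N : Type} (r : LinearRule T N) : ℕ :=
  match r.output with
  | Sum.inl u => u.length
  | Sum.inr (u, _, w) => u.length + w.length

theorem LinearRule.exists_size_bound {T N : Type} (rs : List (LinearRule T N)) :
    ∃ C : ℕ, ∀ r ∈ rs, r.size ≤ C := by
  induction rs with
  | nil => exact ⟨0, by simp⟩
  | cons a l ih =>
    obtain ⟨C, hC⟩ := ih
    refine ⟨max a.size C, fun r hr => ?_⟩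
    rcases List.mem_cons.1 hr with rfl | hr
    · exact le_max_left _ _
    · exact (hC r hr).trans (le_max_right _ _)

theorem LinDerives.mem_inputs {T N : Type} {rs : List (LinearRule T N)} {A : N} {p : List T}
    (hp : LinDerives rs A p) : A ∈ rs.map LinearRule.input := by
  cases hp with
  | terminal hr => exact List.mem_map.2 ⟨_, hr, rfl⟩
  | step hr _ => exact List.mem_map.2 ⟨_, hr, rfl⟩

/-- A derivation of a long word can be cut at any prescribed depth `n`, up to the maximal rule
size `C`: `A ⇒* u B w ⇒* u q w = p` with `n ≤ |u| + |w| ≤ n + C`. The derivation `A ⇒* u B w` is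
recorded by what it does to the words derivable from `B`. -/
theorem exists_cut {T N : Type} {rs : List (LinearRule T N)} {g h C : ℕ}
    (hrate : ∀ r ∈ rs, ∀ u w, ∀ B : N, r.output = Sum.inr (u, B, w) →
      h * w.length = g * u.length)
    (hC : ∀ r ∈ rs, r.size ≤ C) {A : N} {p : List T} (hp : LinDerives rs A p) :
    ∀ n : ℕ, n + C < p.length → ∃ (u : List T) (B : N) (w q : List T),
      p = u ++ q ++ w ∧ LinDerives rs B q ∧
      (∀ q', LinDerives rs B q' → LinDerives rs A (u ++ q' ++ w)) ∧
      h * w.length = g * u.length ∧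
      n ≤ u.length + w.length ∧ u.length + w.length ≤ n + C := by
  induction hp with
  | @terminal A u hr =>
    intro n hn
    have := hC _ hr
    simp only [LinearRule.size] at this
    omega
  | @step A B u w p hr hp ih =>
    intro n hn
    have hsize := hC _ hr
    have hrt := hrate _ hr u w B rfl
    simp only [LinearRule.size] at hsize
    simp only [List.length_append] at hn
    rcases Nat.eq_zero_or_pos n with rfl | hpos
    · exact ⟨[], A, [], u ++ p ++ w, by simp, .step hr hp, by simp, by simp, by simp, by simp⟩
    by_cases hle : n ≤ u.length + w.length
    · exact ⟨u, B, w, p, rfl, hp, fun q' hq' => .step hr hq', hrt, hle, by omega⟩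
    · obtain ⟨u', B', w', q, rfl, hq, hctx, hrt', h1, h2⟩ :=
        ih (n - (u.length + w.length)) (by omega)
      refine ⟨u ++ u', B', w' ++ w, q, by simp, hq, fun q' hq' => ?_, ?_, ?_, ?_⟩
      · simpa using LinDerives.step hr (hctx q' hq')
      · simp only [List.length_append, mul_add, hrt, hrt']
        ring
      · simp only [List.length_append]
        omega
      · simp only [List.length_append]
        omega

/-- If a rated grammar derives every `xᵐ z yʳᵐ` with `m > 0`, then the core `q` of one of these
words can be moved from its context `xⁱ _ yʲ` to a strictly longer context `xⁱ' _ yʲ'`, both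
contexts obeying the rate. -/
theorem exists_context_swap {T : Type} {G : LinearGrammar T} {g h : ℕ} (hG : G.IsRated g h)
    (x y : T) (z : List T) (r : ℕ) (hr : 0 < r)
    (hW : ∀ m : ℕ, 0 < m →
      List.replicate m x ++ z ++ List.replicate (r * m) y ∈ G.language) :
    ∃ (m i j i' j' : ℕ) (q : List T),
      List.replicate m x ++ z ++ List.replicate (r * m) y =
        List.replicate i x ++ q ++ List.replicate j y ∧
      List.replicate i' x ++ q ++ List.replicate j' y ∈ G.language ∧
      h * j = g * i ∧ h * j' = g * i' ∧ i + j < i' + j' := by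
  obtain ⟨C, hC⟩ := LinearRule.exists_size_bound G.rules
  have key : ∀ n : ℕ, ∃ (B : {B // B ∈ G.rules.map LinearRule.input}) (m i j : ℕ) (q : List T),
      List.replicate m x ++ z ++ List.replicate (r * m) y =
        List.replicate i x ++ q ++ List.replicate j y ∧
      LinDerives G.rules B.1 q ∧
      (∀ q', LinDerives G.rules B.1 q' →
        List.replicate i x ++ q' ++ List.replicate j y ∈ G.language) ∧
      h * j = g * i ∧ n ≤ i + j ∧ i + j ≤ n + C := by
    intro n
    have hlen : n + C + 1 ≤ r * (n + C + 1) := Nat.le_mul_of_pos_left _ hr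
    obtain ⟨u, B, w, q, heq, hq, hctx, hrt, h1, h2⟩ :=
      exists_cut hG hC (hW (n + C + 1) (by omega)) n (by simp; omega)
    -- `u` and `w` are shorter than the blocks of `x` and of `y`, so they lie inside them.
    have hu : u = List.replicate u.length x := by
      have := congrArg (List.take u.length) heq
      rw [List.append_assoc, List.append_assoc, List.take_append_of_le_length (by simp; omega),
        List.take_replicate, List.take_left, Nat.min_eq_left (by omega)] at this
      exact this.symm
    have hw : w = List.replicate w.length y := by
      have := congrArg (fun l => List.take w.length l.reverse) heq
      simp only [List.reverse_append, List.reverse_replicate] at this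
      rw [List.take_append_of_le_length (by simp; omega),
        List.take_replicate, List.take_left' (by simp), Nat.min_eq_left (by omega)] at this
      simpa using congrArg List.reverse this.symm
    refine ⟨⟨B, hq.mem_inputs⟩, n + C + 1, u.length, w.length, q, ?_, hq, ?_, hrt, h1, h2⟩
    · rw [← hu, ← hw]
      exact heq
    · rw [← hu, ← hw]
      exact hctx
  choose B m i j q heq hq hctx hrt h1 h2 using key
  have : Finite {B // B ∈ G.rules.map LinearRule.input} :=
    (List.finite_toSet (G.rules.map LinearRule.input)).to_subtype
  -- Depths that are multiples of `C + 1` are separated by more than the cutting error `C`.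
  obtain ⟨s, t, hst, hB⟩ : ∃ s t : ℕ, s < t ∧ B (s * (C + 1)) = B (t * (C + 1)) := by
    obtain ⟨s, t, hne, hB⟩ :=
      Finite.exists_ne_map_eq_of_infinite (fun s : ℕ => B (s * (C + 1)))
    rcases lt_or_gt_of_ne hne with hlt | hlt
    · exact ⟨s, t, hlt, hB⟩
    · exact ⟨t, s, hlt, hB.symm⟩
  have hmul : (s + 1) * (C + 1) ≤ t * (C + 1) := Nat.mul_le_mul_right _ hst
  have hs := h2 (s * (C + 1))
  have ht := h1 (t * (C + 1))
  refine ⟨_, _, _, _, _, _, heq (s * (C + 1)), hctx (t * (C + 1)) _ (hB ▸ hq _), hrt _, hrt _, ?_⟩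
  rw [add_mul, one_mul] at hmul
  omega

theorem abcLang_counts {p : List (Fin 3)} (hp : p ∈ abcLang) :
    (p.count 2 = 0 ∧ p.count 1 = p.count 0) ∨ (p.count 2 = 1 ∧ p.count 1 = 2 * p.count 0) := by
  rcases hp with ⟨m, rfl⟩ | ⟨m, rfl⟩
  · left
    simp [List.count_replicate]
  · right
    simp [List.count_replicate]

/-- A rated grammar for `abcLang` has rate `1`, by the words `aᵐ bᵐ`, and rate `2`, by the words
`aᵐ c b²ᵐ`. -/
theorem not_isRatedLinearLang_abcLang (g h : ℕ) (hh : h ≠ 0) :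
    ¬ IsRatedLinearLang g h abcLang := by
  rintro ⟨G, hG, hL⟩
  -- Slopes of the two displacements: `h * d = g * e` and `d = r * e` with `e ≠ 0` force `g = r * h`.
  have slope : ∀ r i j i' j' : ℕ, h * j = g * i → h * j' = g * i' → i + j < i' + j' →
      j' + r * i = j + r * i' → g = r * h := by
    intro r i j i' j' e1 e2 hlt e3
    have hi : (i : ℤ) ≠ i' := by
      intro hi
      have hi : i = i' := by exact_mod_cast hi
      subst hi
      omega
    zify at e1 e2 e3 ⊢
    refine mul_right_cancel₀ (sub_ne_zero.2 hi) ?_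
    linear_combination e2 - e1 - h * e3
  have mem_of {p : List (Fin 3)} (hp : p ≠ []) (h' : p ∈ G.language) : p ∈ abcLang :=
    (hL p hp).2 h'
  have ne_nil {i j i' j' : ℕ} (q : List (Fin 3)) (hlt : i + j < i' + j') :
      List.replicate i' 0 ++ q ++ List.replicate j' 1 ≠ [] := by
    intro hnil
    have := congrArg List.length hnil
    simp only [List.length_append, List.length_replicate, List.length_nil] at this
    omega
  have rate1 : g = 1 * h := by
    obtain ⟨m, i, j, i', j', q, heq, hmem, e1, e2, hlt⟩ :=
      exists_context_swap hG (0 : Fin 3) 1 [] 1 one_pos (fun m hm => (hL _ (by simp; omega)).1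
        (Or.inl ⟨m, by simp⟩))
    have hc := abcLang_counts (mem_of (ne_nil q hlt) hmem)
    have c0 := congrArg (List.count 0) heq
    have c1 := congrArg (List.count 1) heq
    have c2 := congrArg (List.count 2) heq
    simp [List.count_replicate] at hc c0 c1 c2
    exact slope 1 i j i' j' e1 e2 hlt (by omega)
  have rate2 : g = 2 * h := by
    obtain ⟨m, i, j, i', j', q, heq, hmem, e1, e2, hlt⟩ :=
      exists_context_swap hG (0 : Fin 3) 1 [2] 2 two_pos (fun m hm => (hL _ (by simp)).1
        (Or.inr ⟨m, rfl⟩))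
    have hc := abcLang_counts (mem_of (ne_nil q hlt) hmem)
    have c0 := congrArg (List.count 0) heq
    have c1 := congrArg (List.count 1) heq
    have c2 := congrArg (List.count 2) heq
    simp [List.count_replicate] at hc c0 c1 c2
    exact slope 2 i j i' j' e1 e2 hlt (by omega)
  omega

/-- The language `{aᵐ bᵐ} ∪ {aᵐ c b²ᵐ}` is not `k`-rated linear for any
nonnegative rational `k = g/h`; in particular it is not fix-rated linear
(Example 9). -/
theorem abcLang_not_rated_linear :
    (∀ g h : ℕ, Nat.Coprime g h → h ≠ 0 → ¬ IsRatedLinearLang g h abcLang) ∧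
    ¬ (∃ g h : ℕ, Nat.Coprime g h ∧ h ≠ 0 ∧ IsRatedLinearLang g h abcLang) := by
  refine ⟨fun g h _ hh => not_isRatedLinearLang_abcLang g h hh, ?_⟩
  rintro ⟨g, h, _, hh, hL⟩
  exact not_isRatedLinearLang_abcLang g h hh hL
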